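/- Assume V ∈ C¹(ℝ^N) satisfies (V1) and (V2), and let c_dw ∈ (0, ν₀) be such that for every c ∈ [0, c_dw) condition (V^c) holds with compact sets satisfying a₋ ∈ 𝒱^c₋ ⊆ B_{ϱ₀}(a₋) and a₊ ∈ 𝒱^c₊ ⊆ B_{ϱ₀}(a₊), where ϱ₀ := |a₋ − a₊|/4. Then there exists R_dw > 0 such that for every c ∈ [0, c_dw), every C² solution q of q̈ = ∇V(q) on ℝ with ½|q̇(t)|² − V(q(t)) = −c for all t which admits a connecting time interval (α, ω) ⊆ ℝ (with −∞ ≤ α < ω ≤ +∞) satisfying: V(q(t)) > c on (α, ω); dist(q(t), 𝒱^c₋) → 0 as t → α⁺; dist(q(t), 𝒱^c₊) → 0 as t → ω⁻; J_{c,(α,ω)}(q) = m_c; and ‖q‖_{L^∞(ℝ,ℝ^N)} = ‖q‖_{L^∞((α,ω),ℝ^N)}, satisfies ‖q‖_{L^∞(ℝ,ℝ^N)} ≤ R_dw. -/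

import Mathlib

open MeasureTheory Filter Metric Set Topology
open scoped ENNReal

noncomputable section

/-- Euclidean space `ℝ^N`. -/
abbrev Euc (N : ℕ) := EuclideanSpace ℝ (Fin N)

/-- Distance between two subsets of a metric space. -/
def setDist {E : Type*} [PseudoMetricSpace E] (A B : Set E) : ℝ :=
  sInf ((fun p : E × E => dist p.1 p.2) '' (A ×ˢ B))

/-- `q ∈ H¹_loc(ℝ, ℝ^N)` with derivative `q'`: `q` is locally absolutely continuous with
locally square-integrable derivative `q'`. -/
def IsH1loc {N : ℕ} (q q' : ℝ → Euc N) : Prop :=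
  LocallyIntegrable q' volume ∧
  (∀ a b : ℝ, IntegrableOn (fun t => ‖q' t‖ ^ 2) (Icc a b) volume) ∧
  (∀ a b : ℝ, q b - q a = ∫ t in a..b, q' t)

/-- The action `J_{c,I}(q) = ∫_I (½|q̇(t)|² + (V(q(t)) − c)) dt`, valued in `[0,+∞]`. -/
def lagJ {N : ℕ} (V : Euc N → ℝ) (c : ℝ) (q q' : ℝ → Euc N) (I : Set ℝ) : ℝ≥0∞ :=
  ∫⁻ t in I, ENNReal.ofReal (2⁻¹ * ‖q' t‖ ^ 2 + (V (q t) - c))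

/-- The admissible class `Γ_c` of pairs (function, derivative): `q ∈ H¹_loc`,
`V(q(t)) ≥ c` for all `t`, `liminf_{t→−∞} dist(q(t),𝒱⁻) = 0` and
`liminf_{t→+∞} dist(q(t),𝒱⁺) = 0`. -/
def Gamma {N : ℕ} (V : Euc N → ℝ) (c : ℝ) (Vm Vp : Set (Euc N)) :
    Set ((ℝ → Euc N) × (ℝ → Euc N)) :=
  {p | IsH1loc p.1 p.2 ∧ (∀ t, c ≤ V (p.1 t)) ∧
    (∀ ε > 0, ∃ᶠ t in atBot, infDist (p.1 t) Vm < ε) ∧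
    (∀ ε > 0, ∃ᶠ t in atTop, infDist (p.1 t) Vp < ε)}

/-- `m_c := inf_{q ∈ Γ_c} J_c(q)`. -/
def mc {N : ℕ} (V : Euc N → ℝ) (c : ℝ) (Vm Vp : Set (Euc N)) : ℝ≥0∞ :=
  ⨅ (p) (_ : p ∈ Gamma V c Vm Vp), lagJ V c p.1 p.2 univ

/-- Coercivity condition (1.7) for the constant `R`. -/
def Coercive {N : ℕ} (V : Euc N → ℝ) (c : ℝ) (Vm Vp : Set (Euc N)) (R : ℝ) : Prop :=
  mc V c Vm Vp =
    ⨅ (p) (_ : p ∈ Gamma V c Vm Vp) (_ : ∀ t, ‖p.1 t‖ ≤ R), lagJ V c p.1 p.2 univ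

/-!
The segment from `a₋` to `a₊`, cut down to a piece that joins `𝒱₋` to `𝒱₊` and stays in `V ≥ c`,
is a competitor for `m_c`, so `m_c` is bounded uniformly in `c`. On the other hand there is `δ > 0`
with `V - c ≥ δ` outside a fixed ball, again uniformly in `c`, and there
`√(2δ) |q̇| ≤ ½ |q̇|² + (V(q) - c)` by AM-GM. Hence a path that starts near `𝒱₋` and has action at
most `m_c` travels a bounded distance after it last leaves that ball.
-/

theorem exists_last_exit_lt_first_entry {α X : Type*} [LinearOrder α] [TopologicalSpace α]
    [OrderClosedTopology α] [CompactIccSpace α] [TopologicalSpace X] {γ : α → X} {a b : α}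
    {A B : Set X} (hab : a ≤ b) (hγ : ContinuousOn γ (Icc a b)) (hA : IsClosed A) (hB : IsClosed B)
    (hAB : Disjoint A B) (ha : γ a ∈ A) (hb : γ b ∈ B) :
    ∃ s t, a ≤ s ∧ s < t ∧ t ≤ b ∧ γ s ∈ A ∧ γ t ∈ B ∧ ∀ u ∈ Ioo s t, γ u ∉ A ∪ B := by
  have isCompact_visits {C : Set X} (hC : IsClosed C) {s : α} (hs : a ≤ s) :
      IsCompact (Icc s b ∩ γ ⁻¹' C) :=
    isCompact_Icc.of_isClosed_subset
      ((hγ.mono (Icc_subset_Icc_left hs)).preimage_isClosed_of_isClosed isClosed_Icc hC)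
      inter_subset_left
  obtain ⟨s, ⟨hs, hsA⟩, s_last⟩ :=
    (isCompact_visits hA le_rfl).exists_isGreatest ⟨a, left_mem_Icc.2 hab, ha⟩
  obtain ⟨t, ⟨ht, htB⟩, t_first⟩ :=
    (isCompact_visits hB hs.1).exists_isLeast ⟨b, right_mem_Icc.2 hs.2, hb⟩
  have hst : s < t := ht.1.lt_of_ne fun h => hAB.notMem_of_mem_left hsA (h ▸ htB)
  refine ⟨s, t, hs.1, hst, ht.2, hsA, htB, fun u hu => ?_⟩
  rintro (huA | huB)
  · exact hu.1.not_ge (s_last ⟨⟨hs.1.trans hu.1.le, hu.2.le.trans ht.2⟩, huA⟩)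
  · exact hu.2.not_ge (t_first ⟨⟨hu.1.le, hu.2.le.trans ht.2⟩, huB⟩)

theorem exists_mem_uIcc_forall_le {f : ℝ → ℝ} {a b r : ℝ} (hf : ContinuousOn f (uIcc a b))
    (ha : f a ≤ r) (hb : r ≤ f b) :
    ∃ s ∈ uIcc a b, f s = r ∧ ∀ x ∈ uIcc s b, r ≤ f x := by
  have isCompact_level : IsCompact (uIcc a b ∩ f ⁻¹' {r}) :=
    isCompact_uIcc.of_isClosed_subset
      (hf.preimage_isClosed_of_isClosed isClosed_Icc isClosed_singleton) inter_subset_left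
  obtain ⟨y, hy, hyr⟩ := intermediate_value_uIcc hf (mem_uIcc_of_le ha hb)
  obtain ⟨s, ⟨hs, hsr⟩, s_closest⟩ :=
    isCompact_level.exists_isMinOn ⟨y, hy, hyr⟩ (f := fun x => dist x b) (by fun_prop)
  refine ⟨s, hs, hsr, fun x hx => ?_⟩
  by_contra! hxr
  have hx_uIcc : uIcc x b ⊆ uIcc a b :=
    (uIcc_subset_uIcc_right hx).trans (uIcc_subset_uIcc_right hs)
  obtain ⟨z, hz, hzr⟩ := intermediate_value_uIcc (hf.mono hx_uIcc) (mem_uIcc_of_le hxr.le hb)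
  have hsz : dist s b ≤ dist z b := s_closest ⟨hx_uIcc hz, hzr⟩
  have hzx : dist z b ≤ dist x b := Real.dist_right_le_of_mem_uIcc hz
  have hxs : x = s := by
    have heq : dist x b = dist s b :=
      (Real.dist_right_le_of_mem_uIcc hx).antisymm (hsz.trans hzx)
    rw [Real.dist_eq, Real.dist_eq] at heq
    grind [mem_uIcc]
  exact hxr.ne (hxs ▸ hsr)

theorem exists_real_btwn_of_frequently {α ω : EReal} (h : α < ω) {p : ℝ → Prop}
    (hbot : α = ⊥ → ∃ᶠ t in atBot, p t) (hcoe : ∀ a : ℝ, α = a → ∃ᶠ t in 𝓝[>] a, p t) :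
    ∃ t ∈ Real.toEReal ⁻¹' Ioo α ω, p t := by
  obtain ⟨r, hαr, hrω⟩ := EReal.lt_iff_exists_real_btwn.1 h
  induction α with
  | bot =>
    obtain ⟨t, ht, htr⟩ := ((hbot rfl).and_eventually (eventually_le_atBot r)).exists
    exact ⟨t, ⟨EReal.bot_lt_coe t, (EReal.coe_le_coe_iff.2 htr).trans_lt hrω⟩, ht⟩
  | coe a =>
    obtain ⟨t, ht, htr⟩ :=
      ((hcoe a rfl).and_eventually (Ioo_mem_nhdsGT (EReal.coe_lt_coe_iff.1 hαr))).exists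
    exact ⟨t, ⟨EReal.coe_lt_coe_iff.2 htr.1, (EReal.coe_lt_coe_iff.2 htr.2).trans hrω⟩, ht⟩
  | top => exact absurd h not_top_lt

theorem disjoint_of_setDist_pos {E : Type*} [PseudoMetricSpace E] {A B : Set E}
    (h : 0 < setDist A B) : Disjoint A B := by
  refine disjoint_left.2 fun x hA hB => h.not_ge ?_
  have hbdd : BddBelow ((fun p : E × E => dist p.1 p.2) '' (A ×ˢ B)) :=
    ⟨0, forall_mem_image.2 fun _ _ => dist_nonneg⟩
  exact csInf_le hbdd ⟨(x, x), ⟨hA, hB⟩, dist_self x⟩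

/-- Condition `(V^c)`: the sublevel set `{V ≤ c}` splits into two closed parts. It makes
the action of every path from `A` to `B` an upper bound for `m_c`; for this the positive distance
of the parts can be weakened to disjointness. -/
structure SplitsSublevel {X : Type*} [TopologicalSpace X] (V : X → ℝ) (c : ℝ) (A B : Set X) :
    Prop where
  isClosed_left : IsClosed A
  isClosed_right : IsClosed B
  disjoint : Disjoint A B
  eq_union : {x | V x ≤ c} = A ∪ B

theorem Ioc_projIcc_projIcc {α : Type*} [LinearOrder α] {s t : α} (h : s ≤ t) (a b : α) :
    Ioc (projIcc s t h a : α) (projIcc s t h b) = Ioc a b ∩ Ioc s t := by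
  ext x
  simp only [coe_projIcc, mem_inter_iff, mem_Ioc]
  grind

theorem intervalIntegral_indicator_Ioc {E : Type*} [NormedAddCommGroup E] [NormedSpace ℝ E]
    (f : ℝ → E) {s t : ℝ} (h : s ≤ t) (a b : ℝ) :
    ∫ x in a..b, (Ioc s t).indicator f x = ∫ x in projIcc s t h a..projIcc s t h b, f x := by
  simp only [intervalIntegral, setIntegral_indicator measurableSet_Ioc, Ioc_projIcc_projIcc]

section Action

variable {N : ℕ} {V : Euc N → ℝ} {c : ℝ} {q q' : ℝ → Euc N}

namespace IsH1loc

theorem continuous (hq : IsH1loc q q') : Continuous q := by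
  have hq_eq : q = fun t => q 0 + ∫ s in (0 : ℝ)..t, q' s :=
    funext fun t => by rw [← hq.2.2 0 t, add_sub_cancel]
  rw [hq_eq]
  have hq' : ∀ a b, IntervalIntegrable q' volume a b := fun _ _ =>
    (hq.1.integrableOn_isCompact isCompact_uIcc).intervalIntegrable
  exact continuous_const.add (intervalIntegral.continuous_primitive hq' 0)

theorem of_contDiff (hq : ContDiff ℝ 1 q) : IsH1loc q (deriv q) := by
  have hq' : Continuous (deriv q) := hq.continuous_deriv_one
  refine ⟨hq'.locallyIntegrable, fun a b => (hq'.norm.pow 2).integrableOn_Icc, fun a b => ?_⟩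
  exact (intervalIntegral.integral_deriv_eq_sub
    (fun t _ => hq.differentiable_one t) (hq'.intervalIntegrable a b)).symm

theorem clamp (hq : IsH1loc q q') {s t : ℝ} (h : s ≤ t) :
    IsH1loc (fun u => q (projIcc s t h u)) ((Ioc s t).indicator q') := by
  refine ⟨hq.1.indicator measurableSet_Ioc, fun a b => ?_, fun a b => ?_⟩
  · have hsq : (fun u => ‖(Ioc s t).indicator q' u‖ ^ 2) =
        (Ioc s t).indicator fun u => ‖q' u‖ ^ 2 := by
      ext u
      by_cases hu : u ∈ Ioc s t <;> simp [hu]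
    rw [hsq]
    exact (hq.2.1 a b).indicator measurableSet_Ioc
  · rw [intervalIntegral_indicator_Ioc q' h, hq.2.2]

end IsH1loc

theorem lagJ_mono_set {I J : Set ℝ} (h : I ⊆ J) : lagJ V c q q' I ≤ lagJ V c q q' J :=
  lintegral_mono_set h

theorem lagJ_clamp {s t : ℝ} (h : s ≤ t) (hs : V (q s) ≤ c) (ht : V (q t) ≤ c) :
    lagJ V c (fun u => q (projIcc s t h u)) ((Ioc s t).indicator q') univ =
      lagJ V c q q' (Ioc s t) := by
  rw [lagJ, lagJ, Measure.restrict_univ, ← lintegral_indicator measurableSet_Ioc]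
  refine lintegral_congr fun u => ?_
  by_cases hu : u ∈ Ioc s t
  · simp only [indicator_of_mem hu, projIcc_of_mem h (Ioc_subset_Icc_self hu)]
  · have hV : V (q (projIcc s t h u)) ≤ c := by
      rcases le_or_gt u s with hus | hsu
      · rwa [projIcc_of_le_left h hus]
      · rwa [projIcc_of_right_le h (not_le.1 fun hut => hu ⟨hsu, hut⟩).le]
    simpa only [indicator_of_notMem hu, norm_zero, ne_eq, OfNat.ofNat_ne_zero, not_false_eq_true,
      zero_pow, mul_zero, zero_add, ENNReal.ofReal_eq_zero, sub_nonpos] using hV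

theorem mc_le_lagJ (hV : Continuous V) {Vm Vp : Set (Euc N)} (hsplit : SplitsSublevel V c Vm Vp)
    (hq : IsH1loc q q') {a b : ℝ} (hab : a ≤ b) (ha : q a ∈ Vm) (hb : q b ∈ Vp) :
    mc V c Vm Vp ≤ lagJ V c q q' (Icc a b) := by
  obtain ⟨s, t, has, hst, htb, hs, ht, hbtw⟩ := exists_last_exit_lt_first_entry hab
    hq.continuous.continuousOn hsplit.isClosed_left hsplit.isClosed_right hsplit.disjoint ha hb
  rw [← hsplit.eq_union] at hbtw
  have hVs : V (q s) ≤ c := hsplit.eq_union.ge (Or.inl hs)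
  have hVt : V (q t) ≤ c := hsplit.eq_union.ge (Or.inr ht)
  have hge : ∀ u ∈ Icc s t, c ≤ V (q u) := fun u hu =>
    le_on_closure (fun v hv => (not_le.1 (hbtw v hv)).le) continuousOn_const
      (hV.comp hq.continuous).continuousOn (closure_Ioo hst.ne ▸ hu)
  have hΓ : (fun u => q (projIcc s t hst.le u), (Ioc s t).indicator q') ∈ Gamma V c Vm Vp := by
    refine ⟨hq.clamp hst.le, fun u => hge _ (projIcc s t hst.le u).2,
      fun ε hε => ?_, fun ε hε => ?_⟩
    · refine Eventually.frequently ((eventually_le_atBot s).mono fun u hu => ?_)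
      simpa only [projIcc_of_le_left _ hu, infDist_zero_of_mem hs] using hε
    · refine Eventually.frequently ((eventually_ge_atTop t).mono fun u hu => ?_)
      simpa only [projIcc_of_right_le _ hu, infDist_zero_of_mem ht] using hε
  calc mc V c Vm Vp
      ≤ lagJ V c (fun u => q (projIcc s t hst.le u)) ((Ioc s t).indicator q') univ :=
        iInf₂_le (_, _) hΓ
    _ = lagJ V c q q' (Ioc s t) := lagJ_clamp hst.le hVs hVt
    _ ≤ lagJ V c q q' (Icc a b) :=
        lagJ_mono_set (Ioc_subset_Icc_self.trans (Icc_subset_Icc has htb))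

open AffineMap (lineMap) in
theorem lagJ_lineMap_le {x y : Euc N} {K : ℝ} (hK : ∀ z ∈ segment ℝ x y, V z ≤ K) :
    lagJ V c (lineMap x y) (deriv (lineMap x y)) (Icc 0 1) ≤
      ENNReal.ofReal (2⁻¹ * ‖y - x‖ ^ 2 + (K - c)) := by
  have hle : ∀ t ∈ Icc (0 : ℝ) 1,
      ENNReal.ofReal (2⁻¹ * ‖deriv (lineMap x y) t‖ ^ 2 + (V (lineMap x y t) - c)) ≤
        ENNReal.ofReal (2⁻¹ * ‖y - x‖ ^ 2 + (K - c)) := fun t ht => by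
    rw [AffineMap.hasDerivAt_lineMap.deriv]
    gcongr
    exact hK _ (segment_eq_image_lineMap ℝ x y ▸ mem_image_of_mem _ ht)
  refine (setLIntegral_mono' measurableSet_Icc hle).trans_eq ?_
  rw [setLIntegral_const, Real.volume_Icc, sub_zero, ENNReal.ofReal_one, mul_one]

theorem mc_le_of_forall_segment_le (hV : Continuous V) {Vm Vp : Set (Euc N)}
    (hsplit : SplitsSublevel V c Vm Vp) {x y : Euc N} (hx : x ∈ Vm) (hy : y ∈ Vp) {K : ℝ}
    (hK : ∀ z ∈ segment ℝ x y, V z ≤ K) :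
    mc V c Vm Vp ≤ ENNReal.ofReal (2⁻¹ * ‖y - x‖ ^ 2 + (K - c)) := by
  have hline : IsH1loc (AffineMap.lineMap x y) (deriv (AffineMap.lineMap x y)) :=
    .of_contDiff (by fun_prop)
  exact (mc_le_lagJ hV hsplit hline zero_le_one (by simpa using hx) (by simpa using hy)).trans
    (lagJ_lineMap_le hK)

theorem exists_forall_mc_le (hV : Continuous V) (x y : Euc N) :
    ∃ M ≥ (0 : ℝ), ∀ c, ∀ Vm Vp : Set (Euc N), SplitsSublevel V c Vm Vp → x ∈ Vm → y ∈ Vp →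
      mc V c Vm Vp ≤ ENNReal.ofReal M := by
  have hsegment : IsCompact (segment ℝ x y) :=
    convexHull_pair (𝕜 := ℝ) x y ▸ (toFinite {x, y}).isCompact_convexHull ℝ
  obtain ⟨K, hK⟩ := hsegment.bddAbove_image hV.continuousOn
  replace hK : ∀ z ∈ segment ℝ x y, V z ≤ K := fun z hz => hK (mem_image_of_mem V hz)
  have hVx : 0 ≤ K - V x := sub_nonneg.2 (hK x (left_mem_segment ℝ x y))
  refine ⟨2⁻¹ * ‖y - x‖ ^ 2 + (K - V x), by positivity, fun c Vm Vp hsplit hx hy => ?_⟩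
  have hxc : V x ≤ c := hsplit.eq_union.ge (Or.inl hx)
  exact (mc_le_of_forall_segment_le hV hsplit hx hy hK).trans (by gcongr)

namespace IsH1loc

theorem enorm_sub_le_lintegral (hq : IsH1loc q q') (a b : ℝ) :
    ‖q b - q a‖ₑ ≤ ∫⁻ t in uIoc a b, ‖q' t‖ₑ := by
  rw [hq.2.2, ← ofReal_norm, intervalIntegral.norm_intervalIntegral_eq, ofReal_norm]
  exact enorm_integral_le_lintegral_enorm q'

theorem sqrt_mul_enorm_sub_le_lagJ (hq : IsH1loc q q') {δ : ℝ} (hδ : 0 ≤ δ) {a b : ℝ}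
    (hV : ∀ t ∈ uIoc a b, c + δ ≤ V (q t)) :
    ENNReal.ofReal √(2 * δ) * ‖q b - q a‖ₑ ≤ lagJ V c q q' (uIoc a b) := by
  calc ENNReal.ofReal √(2 * δ) * ‖q b - q a‖ₑ
      ≤ ENNReal.ofReal √(2 * δ) * ∫⁻ t in uIoc a b, ‖q' t‖ₑ := by
        gcongr
        exact hq.enorm_sub_le_lintegral a b
    _ = ∫⁻ t in uIoc a b, ENNReal.ofReal √(2 * δ) * ‖q' t‖ₑ :=
        (lintegral_const_mul' _ _ ENNReal.ofReal_ne_top).symm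
    _ ≤ lagJ V c q q' (uIoc a b) := by
        refine setLIntegral_mono' measurableSet_uIoc fun t ht => ?_
        rw [← ofReal_norm, ← ENNReal.ofReal_mul (Real.sqrt_nonneg _)]
        refine ENNReal.ofReal_le_ofReal ?_
        have amgm := two_mul_le_add_sq √(2 * δ) ‖q' t‖
        rw [Real.sq_sqrt (by positivity)] at amgm
        linarith [hV t ht]

theorem norm_sub_le_of_lagJ_le (hq : IsH1loc q q') {δ M : ℝ} (hδ : 0 < δ) (hM : 0 ≤ M) {a b : ℝ}
    (hV : ∀ t ∈ uIoc a b, c + δ ≤ V (q t)) (hJ : lagJ V c q q' (uIoc a b) ≤ ENNReal.ofReal M) :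
    ‖q b - q a‖ ≤ M / √(2 * δ) := by
  have h := (hq.sqrt_mul_enorm_sub_le_lagJ hδ.le hV).trans hJ
  rw [← ofReal_norm, ← ENNReal.ofReal_mul (Real.sqrt_nonneg _),
    ENNReal.ofReal_le_ofReal_iff hM] at h
  rwa [le_div_iff₀' (by positivity)]

theorem norm_le_of_lagJ_le (hq : IsH1loc q q') {ρ δ M : ℝ} (hδ : 0 < δ) (hM : 0 ≤ M)
    (hV : ∀ x, ρ ≤ ‖x‖ → c + δ ≤ V x) {I : Set ℝ} (hI : I.OrdConnected)
    (hJ : lagJ V c q q' I ≤ ENNReal.ofReal M) {t₀ t : ℝ} (ht₀ : t₀ ∈ I) (ht : t ∈ I)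
    (hρ : ‖q t₀‖ ≤ ρ) : ‖q t‖ ≤ ρ + M / √(2 * δ) := by
  rcases le_or_gt ‖q t‖ ρ with htρ | htρ
  · exact htρ.trans (le_add_of_nonneg_right (by positivity))
  obtain ⟨s, hs, hsρ, houtside⟩ :=
    exists_mem_uIcc_forall_le (b := t) hq.continuous.norm.continuousOn hρ htρ.le
  have hsub : uIoc s t ⊆ I := uIoc_subset_uIcc.trans
    ((uIcc_subset_uIcc_right hs).trans (hI.uIcc_subset ht₀ ht))
  have htravel : ‖q t - q s‖ ≤ M / √(2 * δ) :=
    hq.norm_sub_le_of_lagJ_le hδ hM (fun u hu => hV _ (houtside u (uIoc_subset_uIcc hu)))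
      ((lagJ_mono_set hsub).trans hJ)
  linarith [norm_le_norm_add_norm_sub' (q t) (q s)]

end IsH1loc

end Action

theorem doublewell_uniform_bound_general {N : ℕ} {V : Euc N → ℝ} (hV : Continuous V)
    (am ap : Euc N) {b cdw : ℝ} (hb : cdw < b) (hVb : ∃ ρ : ℝ, ∀ x, ρ ≤ ‖x‖ → b < V x) :
    ∃ R > (0 : ℝ), ∀ c < cdw, ∀ Vm Vp : Set (Euc N), SplitsSublevel V c Vm Vp →
      am ∈ Vm → ap ∈ Vp → ∀ q q' : ℝ → Euc N, IsH1loc q q' →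
        ∀ I : Set ℝ, I.OrdConnected → (∃ t ∈ I, infDist (q t) Vm < 1) →
          lagJ V c q q' I ≤ mc V c Vm Vp → ∀ t ∈ I, ‖q t‖ ≤ R := by
  obtain ⟨ρ, hρ⟩ := hVb
  obtain ⟨M, hM, hmcM⟩ := exists_forall_mc_le hV am ap
  refine ⟨|ρ| + 1 + M / √(2 * (b - cdw)), by positivity, ?_⟩
  rintro c hc Vm Vp hsplit ham hap q q' hq I hI ⟨t₀, ht₀, hnear⟩ hJ t ht
  have hstart : ‖q t₀‖ ≤ |ρ| + 1 := by
    obtain ⟨y, hy, hyd⟩ := (infDist_lt_iff ⟨am, ham⟩).1 hnear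
    have hVy : V y ≤ c := hsplit.eq_union.ge (Or.inl hy)
    have hyρ : ‖y‖ < ρ := lt_of_not_ge fun h => (hρ y h).not_ge (hVy.trans (hc.trans hb).le)
    rw [dist_eq_norm] at hyd
    linarith [norm_le_norm_add_norm_sub' (q t₀) y, le_abs_self ρ]
  refine hq.norm_le_of_lagJ_le (sub_pos.2 hb) hM (fun x hx => ?_) hI
    (hJ.trans (hmcM c Vm Vp hsplit ham hap)) ht₀ ht hstart
  linarith [hρ x (by linarith [le_abs_self ρ])]

/-- Lemma 3.1 (uniform bound for double-well systems): there is `R_dw > 0` bounding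
uniformly in `c ∈ [0, c_dw)` every connecting solution with energy `−c` whose action on its
connecting time interval equals `m_c`. -/
theorem doublewell_uniform_bound {N : ℕ} (hN : 0 < N) (V : Euc N → ℝ) (hV : ContDiff ℝ 1 V)
    (am ap : Euc N) (hne : am ≠ ap) (hVam : V am = 0) (hVap : V ap = 0)
    (hVpos : ∀ x, x ≠ am → x ≠ ap → 0 < V x)
    (ν₀ : ℝ) (hν₀ : 0 < ν₀)
    (hliminf₁ : ∀ b : ℝ, b < ν₀ → ∃ ρ : ℝ, ∀ x : Euc N, ρ ≤ ‖x‖ → b < V x)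
    (hliminf₂ : ∀ b : ℝ, ν₀ < b → ∀ ρ : ℝ, ∃ x : Euc N, ρ ≤ ‖x‖ ∧ V x < b)
    (cdw : ℝ) (hcdw0 : 0 < cdw) (hcdwν : cdw < ν₀)
    (Vm Vp : ℝ → Set (Euc N))
    (hsets : ∀ c : ℝ, 0 ≤ c → c < cdw →
      IsCompact (Vm c) ∧ IsCompact (Vp c) ∧
      {x | V x ≤ c} = Vm c ∪ Vp c ∧ 0 < setDist (Vm c) (Vp c) ∧
      am ∈ Vm c ∧ Vm c ⊆ ball am (dist am ap / 4) ∧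
      ap ∈ Vp c ∧ Vp c ⊆ ball ap (dist am ap / 4)) :
    ∃ Rdw > (0 : ℝ), ∀ c : ℝ, 0 ≤ c → c < cdw →
      ∀ q : ℝ → Euc N, ContDiff ℝ 2 q →
        (∀ t, deriv (deriv q) t = gradient V (q t)) →
        (∀ t, 2⁻¹ * ‖deriv q t‖ ^ 2 - V (q t) = -c) →
        ∀ α ω : EReal, α < ω →
          (∀ t : ℝ, α < (t : EReal) → (t : EReal) < ω → c < V (q t)) →
          ((α = ⊥ → Tendsto (fun t => infDist (q t) (Vm c)) atBot (𝓝 0)) ∧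
           (∀ a : ℝ, α = (a : EReal) →
              Tendsto (fun t => infDist (q t) (Vm c)) (𝓝[>] a) (𝓝 0))) →
          ((ω = ⊤ → Tendsto (fun t => infDist (q t) (Vp c)) atTop (𝓝 0)) ∧
           (∀ b : ℝ, ω = (b : EReal) →
              Tendsto (fun t => infDist (q t) (Vp c)) (𝓝[<] b) (𝓝 0))) →
          lagJ V c q (deriv q) {t : ℝ | α < (t : EReal) ∧ (t : EReal) < ω}
            = mc V c (Vm c) (Vp c) →
          (∀ M : ℝ, (∀ t : ℝ, α < (t : EReal) → (t : EReal) < ω → ‖q t‖ ≤ M) →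
            ∀ t : ℝ, ‖q t‖ ≤ M) →
          ∀ t : ℝ, ‖q t‖ ≤ Rdw := by
  obtain ⟨R, hR, bound⟩ := doublewell_uniform_bound_general hV.continuous am ap
    (left_lt_add_div_two.2 hcdwν) (hliminf₁ _ (add_div_two_lt_right.2 hcdwν))
  exact ⟨R, hR, fun c hc₀ hc q hq _ _ α ω hαω _ hα _ hJ hsup =>
    have ⟨hm, hp, hunion, hdist, ham, _, hap, _⟩ := hsets c hc₀ hc
    have hnear := exists_real_btwn_of_frequently hαω
      (fun h => ((hα.1 h).eventually_lt_const one_pos).frequently)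
      (fun a h => ((hα.2 a h).eventually_lt_const one_pos).frequently)
    hsup R fun t hαt htω => bound c hc (Vm c) (Vp c)
      ⟨hm.isClosed, hp.isClosed, disjoint_of_setDist_pos hdist, hunion⟩ ham hap
      q (deriv q) (.of_contDiff (hq.of_le one_le_two)) (Real.toEReal ⁻¹' Ioo α ω)
      (ordConnected_Ioo.preimage_mono EReal.coe_strictMono.monotone) hnear hJ.le t ⟨hαt, htω⟩⟩
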